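/- Let A and B be FDDS, let t_a be an unroll tree of 𝒰(A) and t_b an unroll tree of 𝒰(B). Suppose there exists an infinite rooted tree x (with finitely many vertices at each depth) such that t_a·x = t_b and such that the multiset {σ^i(t_a)·x : 0 ≤ i < |Shift(t_a)|} is a sub-multiset of 𝒰(B). Then x is an unroll tree, and the multiset {t_a·σ^j(x) : 0 ≤ j < |Shift(x)|} is a sub-multiset of 𝒰(B). -/

import Mathlib

noncomputable section

/-- A rooted tree (finite or infinite), presented by its levels: `level n` is the
set of vertices of depth `n` (finitely many at each depth), every vertex of depth
`n+1` has a parent of depth `n` (edges are directed towards the root), and there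
is a unique vertex of depth `0`, the root. -/
structure RTree : Type 1 where
  level : ℕ → Type
  parent : ∀ n, level (n + 1) → level n
  fin : ∀ n, Fintype (level n)
  root : level 0
  root_unique : ∀ x : level 0, x = root

namespace RTree

/-- Isomorphism of rooted trees: a depth-preserving bijection of the vertices
commuting with the parent maps (hence root- and edge-preserving). -/
def Iso (t s : RTree) : Prop :=
  ∃ e : ∀ n, t.level n ≃ s.level n,
    ∀ (n : ℕ) (x : t.level (n + 1)), e n (t.parent n x) = s.parent n (e (n + 1) x)

/-- The (layer-by-layer direct) product of two rooted trees. -/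
def tprod (t s : RTree) : RTree where
  level n := t.level n × s.level n
  parent n x := (t.parent n x.1, s.parent n x.2)
  fin n := by haveI := t.fin n; haveI := s.fin n; infer_instance
  root := (t.root, s.root)
  root_unique x := by
    obtain ⟨a, b⟩ := x
    rw [t.root_unique a, s.root_unique b]

/-- The cut of a tree at depth `n`: the subtree induced on vertices of depth `≤ n`. -/
def tcut (t : RTree) (n : ℕ) : RTree where
  level k := PLift (k ≤ n) × t.level k
  parent k x := (⟨Nat.le_of_succ_le x.1.down⟩, t.parent k x.2)
  fin k := by
    haveI := t.fin k
    haveI : Finite (PLift (k ≤ n)) := Finite.of_subsingleton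
    exact Fintype.ofFinite _
  root := (⟨Nat.zero_le n⟩, t.root)
  root_unique x := by
    obtain ⟨a, b⟩ := x
    rw [t.root_unique b]

/-- A tree is finite when it has no vertices below some depth. -/
def IsFinite (t : RTree) : Prop := ∃ N, ∀ k, N ≤ k → IsEmpty (t.level k)

/-- The depth of a (finite) tree: the largest depth of one of its vertices. -/
def depth (t : RTree) : ℕ := sSup {n | Nonempty (t.level n)}

/-- `tpow t k` is the `k`-fold product `t^k` of the tree `t` with itself (for `k ≥ 1`). -/
def tpow (t : RTree) : ℕ → RTree
  | 0 => t
  | 1 => t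
  | n + 2 => tprod t (tpow t (n + 1))

/-- Iterated parent map, sending a vertex of depth `k+1` to its ancestor of depth 1. -/
def down (t : RTree) : ∀ k, t.level (k + 1) → t.level 1
  | 0, x => x
  | k + 1, x => t.down k (t.parent (k + 1) x)

/-- The subtree of `t` rooted at the depth-1 vertex `v` (a child of the root). -/
def subtreeAt (t : RTree) (v : t.level 1) : RTree where
  level k := { x : t.level (k + 1) // t.down k x = v }
  parent k x := ⟨t.parent (k + 1) x.1, x.2⟩
  fin k := by haveI := t.fin (k + 1); exact Fintype.ofFinite _
  root := ⟨v, rfl⟩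
  root_unique x := Subtype.ext x.2

/-- `D t`: the forest (here, a list) of the subtrees of `t` rooted at the
children of the root. -/
def D (t : RTree) : List RTree := (@Finset.univ _ (t.fin 1)).toList.map t.subtreeAt

end RTree

/-- A forest is a finite multiset of rooted trees; we represent it by a list of
(concrete) trees, equality of forests being `ForestEq` below. -/
abbrev Forest := List RTree

/-- Equality of forests as multisets of isomorphism classes of rooted trees. -/
def ForestEq (F G : Forest) : Prop := Multiset.Rel RTree.Iso (↑F) (↑G)

/-- `F` is a sub-multiset of `G` up to isomorphism of rooted trees. -/
def ForestLe (F G : Forest) : Prop :=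
  ∃ H : Multiset RTree, H ≤ (↑G : Multiset RTree) ∧ Multiset.Rel RTree.Iso (↑F) H

/-- The product of two forests: the multiset of pairwise products. -/
def fprod (F G : Forest) : Forest := (F.map fun t => G.map fun s => t.tprod s).flatten

/-- The cut of a forest at depth `n`. -/
def fcut (F : Forest) (n : ℕ) : Forest := F.map (RTree.tcut · n)

/-- The depth of a forest: maximum of the depths of its trees. -/
def fdepth (F : Forest) : ℕ := (F.map RTree.depth).foldr max 0

/-- `fpow F k` is the `k`-fold product `F^k` of the forest `F` with itself (for `k ≥ 1`). -/
def fpow (F : Forest) : ℕ → Forest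
  | 0 => F
  | 1 => F
  | n + 2 => fprod F (fpow F (n + 1))

/-- `D` of a forest: the multiset union of the `D` of its trees. -/
def fD (F : Forest) : Forest := (F.map RTree.D).flatten

/-- `R F`: the rooted tree obtained by attaching each tree of the forest `F`
as a child subtree of a new common root, so that `D (R F) = F`. -/
def rollRoot (F : Forest) : RTree where
  level k :=
    match k with
    | 0 => PUnit
    | k + 1 => Σ i : Fin F.length, (F.get i).level k
  parent k :=
    match k with
    | 0 => fun _ => PUnit.unit
    | k + 1 => fun x => ⟨x.1, (F.get x.1).parent k x.2⟩
  fin k := by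
    match k with
    | 0 => exact inferInstanceAs (Fintype PUnit)
    | k + 1 =>
      haveI : ∀ i : Fin F.length, Fintype ((F.get i).level k) := fun i => (F.get i).fin k
      exact inferInstanceAs (Fintype (Σ i : Fin F.length, (F.get i).level k))
  root := PUnit.unit
  root_unique _ := rfl

/-- The number of vertices of depth `d` in a forest. -/
def levelCard (F : Forest) (d : ℕ) : ℕ := (F.map fun t => @Fintype.card _ (t.fin d)).sum

/-- The total number of vertices of a (finite) forest. -/
def totalCard (F : Forest) : ℕ := ∑ d ∈ Finset.range (fdepth F + 1), levelCard F d

/-- A finite discrete-time dynamical system: a finite set of states together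
with a transition function. -/
structure FDDS : Type 1 where
  S : Type
  fin : Fintype S
  f : S → S

namespace FDDS

/-- A state is periodic when some positive iterate of the transition function fixes it. -/
def Periodic (A : FDDS) (u : A.S) : Prop := ∃ p, 1 ≤ p ∧ A.f^[p] u = u

/-- The least `k` such that `f^[k] s` is periodic. -/
def depthOf (A : FDDS) (s : A.S) : ℕ := sInf {k | A.Periodic (A.f^[k] s)}

/-- The depth of an FDDS: the maximum over states `s` of the least `k` such
that `f^[k] s` is periodic. -/
def depth (A : FDDS) : ℕ := sSup {d | ∃ s : A.S, d = A.depthOf s}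

/-- The functional digraph of `A` has a single (weakly) connected component. -/
def Connected (A : FDDS) : Prop := ∀ s s' : A.S, ∃ k l, A.f^[k] s = A.f^[l] s'

/-- The unroll tree of `A` in the state `u`: vertices of depth `k` are the
`k`-th preimages of `u`, the parent of `(v,k+1)` being `(f v, k)`. -/
def unrollTree (A : FDDS) (u : A.S) : RTree where
  level k := { s : A.S // A.f^[k] s = u }
  parent k x := ⟨A.f x.1, by rw [← Function.iterate_succ_apply]; exact x.2⟩
  fin k := by haveI := A.fin; exact Fintype.ofFinite _
  root := ⟨u, rfl⟩
  root_unique x := Subtype.ext x.2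

/-- The unroll of `A`: the multiset of the unroll trees of `A` in its periodic states. -/
def unroll (A : FDDS) : Forest :=
  haveI := A.fin
  letI : DecidablePred A.Periodic := Classical.decPred _
  (Finset.univ.filter A.Periodic).toList.map A.unrollTree

/-- The minimal period of a periodic state. -/
def minPeriod (A : FDDS) (u : A.S) : ℕ := sInf {p | 1 ≤ p ∧ A.f^[p] u = u}

/-- The periodic state `w` with `f^[i] w = u`: the `i`-th "shift" of `u`
backwards along its cycle. -/
def shiftState (A : FDDS) (u : A.S) (i : ℕ) : A.S := A.f^[i * (A.minPeriod u - 1)] u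

/-- The shift `σ^i(t)` of the unroll tree `t = unrollTree A u`: the unroll tree
rooted at the depth-`i` vertex of the infinite branch of `t`. -/
def shiftTree (A : FDDS) (u : A.S) (i : ℕ) : RTree := A.unrollTree (A.shiftState u i)

/-- The unroll tree of `A` in `u` admits a periodic pattern of size `p ≥ 1`,
i.e. `σ^p(t_u) = t_u`. -/
def PatternSize (A : FDDS) (u : A.S) (p : ℕ) : Prop :=
  1 ≤ p ∧ RTree.Iso (A.shiftTree u p) (A.unrollTree u)

/-- `|Shift(t_u)|`: the smallest size of a periodic pattern of the unroll tree of `A` in `u`. -/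
def shiftCount (A : FDDS) (u : A.S) : ℕ := sInf {p | A.PatternSize u p}

end FDDS

/-- A rooted tree is an unroll tree when it is isomorphic to the unroll tree of
some FDDS in one of its periodic states. -/
def IsUnrollTree (x : RTree) : Prop :=
  ∃ (A : FDDS) (u : A.S), A.Periodic u ∧ RTree.Iso x (A.unrollTree u)

end

instance rtFin (t : RTree) (n : ℕ) : Fintype (t.level n) := t.fin n

instance fddsFin (A : FDDS) : Fintype A.S := A.fin

noncomputable instance rtChFin (t : RTree) (k : ℕ) (v : t.level k) :
    Fintype {c : t.level (k + 1) // t.parent k c = v} := Fintype.ofFinite _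

namespace S12

/-! ### Counting homomorphisms and cancellation -/

def Q : ℕ → Type
  | 0 => Empty
  | n + 1 => FreeMonoid (Q n)

open scoped Classical in
/-- Characters counting homomorphisms of patterns of depth `≤ n` into the subtree at `v`. -/
noncomputable def hom (t : RTree) : ∀ (n : ℕ) {k : ℕ}, t.level k → (FreeMonoid (Q n) →* ℤ)
  | 0, _, _ => 1
  | n + 1, k, v => FreeMonoid.lift (fun g : FreeMonoid (Q n) =>
      ∑ c : t.level (k + 1), if t.parent k c = v then hom t n c g else 0)

open scoped Classical in
lemma hom_of (t : RTree) (n : ℕ) {k : ℕ} (v : t.level k) (g : FreeMonoid (Q n)) :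
    hom t (n + 1) v (FreeMonoid.of (α := Q (n+1)) g) =
      ∑ c : t.level (k + 1), if t.parent k c = v then hom t n c g else 0 := by
  rw [hom]; exact FreeMonoid.lift_eval_of _ _

lemma hom_of' (t : RTree) (n : ℕ) {k : ℕ} (v : t.level k) (g : FreeMonoid (Q n)) :
    hom t (n + 1) v (FreeMonoid.of (α := Q (n+1)) g) =
      ∑ c : {c : t.level (k + 1) // t.parent k c = v}, hom t n c.1 g := by
  classical
  rw [hom_of, ← Finset.sum_filter]
  exact Finset.sum_subtype _ (by simp) _

lemma hom_ext {n : ℕ} {φ ψ : FreeMonoid (Q (n+1)) →* ℤ}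
    (h : ∀ g : FreeMonoid (Q n), φ (FreeMonoid.of (α := Q (n+1)) g) =
      ψ (FreeMonoid.of (α := Q (n+1)) g)) : φ = ψ :=
  FreeMonoid.hom_eq h

lemma hom_zero_eq {φ ψ : FreeMonoid (Q 0) →* ℤ} : φ = ψ :=
  FreeMonoid.hom_eq (fun x : Empty => x.elim)

lemma hom_prod (t s : RTree) (n : ℕ) : ∀ {k : ℕ} (v : t.level k) (w : s.level k),
    hom (t.tprod s) n (k := k) ((v, w) : t.level k × s.level k) = hom t n v * hom s n w := by
  classical
  induction n with
  | zero => intros; exact hom_zero_eq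
  | succ n ih =>
    intro k v w
    apply hom_ext
    intro g
    rw [MonoidHom.mul_apply, hom_of t, hom_of s, Finset.sum_mul_sum, ← Finset.sum_product']
    refine (hom_of (t.tprod s) n (k := k) _ g).trans ?_
    refine Finset.sum_congr (by rfl) ?_
    rintro ⟨c, d⟩ -
    have h1 : (t.tprod s).parent k (c, d) = (t.parent k c, s.parent k d) := rfl
    rw [h1]
    have h2 := ih c d
    by_cases h3 : t.parent k c = v
    · by_cases h4 : s.parent k d = w
      · subst h3 h4
        simp only [if_true]
        rw [h2]; exact if_pos rfl
      · rw [if_neg, if_neg h4, mul_zero]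
        intro h; exact h4 (Prod.mk.inj h).2
    · rw [if_neg, if_neg h3, zero_mul]
      intro h; exact h3 (Prod.mk.inj h).1

lemma hom_iso {t s : RTree} (e : ∀ n, t.level n ≃ s.level n)
    (he : ∀ (n : ℕ) (x : t.level (n + 1)), e n (t.parent n x) = s.parent n (e (n + 1) x))
    (n : ℕ) : ∀ {k : ℕ} (v : t.level k), hom t n v = hom s n (e k v) := by
  classical
  induction n with
  | zero => intros; exact hom_zero_eq
  | succ n ih =>
    intro k v
    apply hom_ext
    intro g
    rw [hom_of, hom_of, ← Equiv.sum_comp (e (k+1))]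
    refine Finset.sum_congr rfl ?_
    intro c _
    rw [← he, ih c]
    simp

lemma hom_nonneg (t : RTree) (n : ℕ) : ∀ {k : ℕ} (v : t.level k) g, 0 ≤ hom t n v g := by
  classical
  induction n with
  | zero => intro k v g; simp [hom]
  | succ n ih =>
    intro k v g
    induction g using FreeMonoid.recOn with
    | one => simp
    | of_mul x xs hx =>
      rw [map_mul]
      refine mul_nonneg ?_ hx
      have := hom_of t n v x
      rw [this]
      refine Finset.sum_nonneg fun c _ => ?_
      split_ifs
      · exact ih c _
      · exact le_rfl

lemma hom_pos (t : RTree) (b : ∀ k, t.level k) (hb : ∀ k, t.parent k (b (k+1)) = b k)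
    (n : ℕ) : ∀ k g, 0 < hom t n (b k) g := by
  classical
  induction n with
  | zero => intro k g; simp [hom]
  | succ n ih =>
    intro k g
    induction g using FreeMonoid.recOn with
    | one => simp
    | of_mul x xs hx =>
      rw [map_mul]
      refine mul_pos ?_ hx
      have := hom_of t n (b k) x
      rw [this]
      refine Finset.sum_pos' (fun c _ => ?_) ⟨b (k+1), Finset.mem_univ _, ?_⟩
      · split_ifs
        · exact hom_nonneg t n c _
        · exact le_rfl
      · rw [if_pos (hb k)]; exact ih _ _

lemma match_chars {M α β : Type} [Monoid M] [Fintype α] [Fintype β]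
    (p : α → (M →* ℤ)) (q : β → (M →* ℤ)) (h : ∀ g, ∑ a, p a g = ∑ b, q b g) :
    ∃ σ : α ≃ β, ∀ a, p a = q (σ a) := by
  classical
  have hli := linearIndependent_monoidHom M ℤ
  have hinj : Function.Injective (Finsupp.linearCombination ℤ (fun f : M →* ℤ => (f : M → ℤ))) := hli
  have heq : (∑ a, Finsupp.single (p a) (1:ℤ)) = ∑ b, Finsupp.single (q b) (1:ℤ) := by
    apply hinj
    rw [map_sum, map_sum]
    funext g
    simpa [Finset.sum_apply] using h g
  have hcard : ∀ χ, Nonempty ({a // p a = χ} ≃ {b // q b = χ}) := by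
    intro χ
    have h1 := DFunLike.congr_fun heq χ
    simp only [Finsupp.finsetSum_apply, Finsupp.single_apply, Finset.sum_boole] at h1
    refine ⟨Fintype.equivOfCardEq ?_⟩
    rw [Fintype.card_subtype, Fintype.card_subtype]
    exact_mod_cast h1
  let σ : ∀ χ, {a // p a = χ} ≃ {b // q b = χ} := fun χ => (hcard χ).some
  refine ⟨(Equiv.sigmaFiberEquiv p).symm.trans ((Equiv.sigmaCongrRight σ).trans
    (Equiv.sigmaFiberEquiv q)), ?_⟩
  intro a
  exact ((σ (p a)) ⟨a, rfl⟩).2.symm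

lemma match_children {t s : RTree} {k l : ℕ} {v : t.level k} {w : s.level l} {n : ℕ}
    (h : hom t (n+1) v = hom s (n+1) w) :
    ∃ σ : {c : t.level (k + 1) // t.parent k c = v} ≃ {c : s.level (l + 1) // s.parent l c = w},
      ∀ c, hom t n c.1 = hom s n (σ c).1 := by
  refine match_chars (fun c : {c : t.level (k + 1) // t.parent k c = v} => hom t n c.1)
    (fun c : {c : s.level (l + 1) // s.parent l c = w} => hom s n c.1) ?_
  intro g
  have := DFunLike.congr_fun h (FreeMonoid.of (α := Q (n+1)) g)
  rwa [hom_of', hom_of'] at this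

lemma hom_mono (t s : RTree) (n : ℕ) : ∀ {k l : ℕ} {v : t.level k} {w : s.level l},
    hom t (n+1) v = hom s (n+1) w → hom t n v = hom s n w := by
  induction n with
  | zero => intros; exact hom_zero_eq
  | succ n ih =>
    intro k l v w h
    obtain ⟨σ, hσ⟩ := match_children h
    apply hom_ext
    intro g
    rw [hom_of', hom_of', ← Equiv.sum_comp σ]
    refine Finset.sum_congr rfl fun c _ => ?_
    rw [ih (hσ c)]

lemma hom_mono' (t s : RTree) {k l : ℕ} {v : t.level k} {w : s.level l} {m n : ℕ} (hmn : m ≤ n)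
    (h : hom t n v = hom s n w) : hom t m v = hom s m w := by
  induction hmn with
  | refl => exact h
  | step _ ih => exact ih (hom_mono _ _ _ h)

lemma match_all {t s : RTree} {k l : ℕ} {v : t.level k} {w : s.level l}
    (h : ∀ n, hom t n v = hom s n w) :
    ∃ σ : {c : t.level (k + 1) // t.parent k c = v} ≃ {c : s.level (l + 1) // s.parent l c = w},
      ∀ c n, hom t n c.1 = hom s n (σ c).1 := by
  classical
  by_contra hcon
  push Not at hcon
  choose c n hn using hcon
  obtain ⟨σ, hσ⟩ := match_children (h (Finset.univ.sup n + 1))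
  exact hn σ (hom_mono' _ _ (Finset.le_sup (Finset.mem_univ σ)) (hσ _))

lemma iso_of_hom {t s : RTree} (h : ∀ n, hom t n t.root = hom s n s.root) : RTree.Iso t s := by
  classical
  have step : ∀ k (e : {e : t.level k ≃ s.level k // ∀ v n, hom t n v = hom s n (e v)}),
      ∃ e' : {e : t.level (k+1) ≃ s.level (k+1) // ∀ v n, hom t n v = hom s n (e v)},
        ∀ x, e.1 (t.parent k x) = s.parent k (e'.1 x) := by
    rintro k ⟨e, he⟩
    choose σ hσ using fun v => match_all (he v)
    refine ⟨⟨(Equiv.sigmaFiberEquiv (t.parent k)).symm.trans ((Equiv.sigmaCongr e σ).trans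
      (Equiv.sigmaFiberEquiv (s.parent k))), ?_⟩, ?_⟩
    · intro c n
      exact hσ (t.parent k c) ⟨c, rfl⟩ n
    · intro c
      exact ((σ (t.parent k c)) ⟨c, rfl⟩).2.symm
  choose nxt hnxt using step
  let e0 : {e : t.level 0 ≃ s.level 0 // ∀ v n, hom t n v = hom s n (e v)} :=
    ⟨⟨fun _ => s.root, fun _ => t.root, fun x => (t.root_unique x).symm,
      fun x => (s.root_unique x).symm⟩, fun v n => by rw [t.root_unique v]; exact h n⟩
  let e : ∀ k, {e : t.level k ≃ s.level k // ∀ v n, hom t n v = hom s n (e v)} :=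
    fun k => Nat.rec e0 nxt k
  exact ⟨fun k => (e k).1, fun k x => hnxt k (e k) x⟩

lemma hom_root_of_iso {t s : RTree} (h : RTree.Iso t s) (n : ℕ) :
    hom t n t.root = hom s n s.root := by
  obtain ⟨e, he⟩ := h
  rw [hom_iso e he, s.root_unique (e 0 t.root)]

theorem cancel {t x y : RTree} (b : ∀ k, t.level k) (hb : ∀ k, t.parent k (b (k+1)) = b k)
    (h : RTree.Iso (t.tprod x) (t.tprod y)) : RTree.Iso x y := by
  apply iso_of_hom
  intro n
  have h1 := hom_root_of_iso h n
  have h2 : hom t n t.root * hom x n x.root = hom t n t.root * hom y n y.root := by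
    rw [← hom_prod, ← hom_prod]; exact h1
  refine MonoidHom.ext fun g => ?_
  have h3 := DFunLike.congr_fun h2 g
  simp only [MonoidHom.mul_apply] at h3
  have h4 := hom_pos t b hb n 0 g
  rw [t.root_unique (b 0)] at h4
  exact mul_left_cancel₀ h4.ne' h3

/-! ### Isomorphisms, subtrees -/

lemma iso_refl (t : RTree) : RTree.Iso t t := ⟨fun _ => Equiv.refl _, fun _ _ => rfl⟩

lemma iso_symm {t s : RTree} (h : RTree.Iso t s) : RTree.Iso s t := by
  obtain ⟨e, he⟩ := h
  refine ⟨fun n => (e n).symm, fun n x => ?_⟩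
  rw [Equiv.symm_apply_eq, he]
  simp

lemma iso_trans {t s r : RTree} (h : RTree.Iso t s) (h' : RTree.Iso s r) : RTree.Iso t r := by
  obtain ⟨e, he⟩ := h
  obtain ⟨e', he'⟩ := h'
  refine ⟨fun n => (e n).trans (e' n), fun n x => ?_⟩
  simp [he, he']

lemma iso_prod {t t' s s' : RTree} (h : RTree.Iso t t') (h' : RTree.Iso s s') :
    RTree.Iso (t.tprod s) (t'.tprod s') := by
  obtain ⟨e, he⟩ := h
  obtain ⟨e', he'⟩ := h'
  refine ⟨fun n => Equiv.prodCongr (e n) (e' n), fun n x => ?_⟩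
  exact Prod.ext (he n x.1) (he' n x.2)

/-- The ancestor of depth `N` of a vertex of depth `N + k`. -/
def anc (t : RTree) (N : ℕ) : ∀ k, t.level (N + k) → t.level N
  | 0, y => y
  | k + 1, y => anc t N k (t.parent (N + k) y)

/-- The subtree at a vertex of depth `N`. -/
noncomputable def sub (t : RTree) (N : ℕ) (v : t.level N) : RTree where
  level k := { y : t.level (N + k) // anc t N k y = v }
  parent k y := ⟨t.parent (N + k) y.1, y.2⟩
  fin _ := Fintype.ofFinite _
  root := ⟨v, rfl⟩
  root_unique y := Subtype.ext y.2

lemma anc_iso {t s : RTree} (e : ∀ n, t.level n ≃ s.level n)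
    (he : ∀ (n : ℕ) (x : t.level (n + 1)), e n (t.parent n x) = s.parent n (e (n + 1) x))
    (N k : ℕ) : ∀ y : t.level (N + k), e N (anc t N k y) = anc s N k (e (N + k) y) := by
  induction k with
  | zero => intro y; rfl
  | succ k ih =>
    intro y
    have h1 := ih (t.parent (N + k) y)
    rw [he] at h1
    exact h1

lemma sub_iso {t s : RTree} (e : ∀ n, t.level n ≃ s.level n)
    (he : ∀ (n : ℕ) (x : t.level (n + 1)), e n (t.parent n x) = s.parent n (e (n + 1) x))
    (N : ℕ) (v : t.level N) : RTree.Iso (sub t N v) (sub s N (e N v)) := by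
  refine ⟨fun k => Equiv.subtypeEquiv (e (N + k)) ?_, ?_⟩
  · intro y
    rw [← anc_iso e he, (e N).apply_eq_iff_eq]
  · intro k y
    exact Subtype.ext (he (N + k) y.1)

lemma anc_prod (t s : RTree) (N k : ℕ) (c : t.level (N + k)) (d : s.level (N + k)) :
    anc (t.tprod s) N k (c, d) = (anc t N k c, anc s N k d) := by
  induction k with
  | zero => rfl
  | succ k ih => exact ih (t.parent (N + k) c) (s.parent (N + k) d)

lemma sub_prod (t s : RTree) (N : ℕ) (v : t.level N) (w : s.level N) :
    RTree.Iso ((sub t N v).tprod (sub s N w)) (sub (t.tprod s) N (v, w)) := by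
  refine ⟨fun k => ⟨fun y => ⟨(y.1.1, y.2.1), ?_⟩,
    fun y => (⟨y.1.1, ?_⟩, ⟨y.1.2, ?_⟩), ?_, ?_⟩, ?_⟩
  · rw [anc_prod, y.1.2, y.2.2]
  · have h := y.2
    rw [show y.1 = (y.1.1, y.1.2) from rfl, anc_prod] at h
    exact (Prod.mk.inj h).1
  · have h := y.2
    rw [show y.1 = (y.1.1, y.1.2) from rfl, anc_prod] at h
    exact (Prod.mk.inj h).2
  · intro y; rfl
  · intro y; rfl
  · intro k y; rfl

/-! ### Periodic states -/

section fdds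
variable (A : FDDS)

lemma minPeriod_spec {u : A.S} (hu : A.Periodic u) :
    1 ≤ A.minPeriod u ∧ A.f^[A.minPeriod u] u = u :=
  Nat.sInf_mem (s := {p | 1 ≤ p ∧ A.f^[p] u = u}) hu

lemma shift_zero (u : A.S) : A.shiftState u 0 = u := by
  simp [FDDS.shiftState]

lemma periodic_iter {u : A.S} (hu : A.Periodic u) (k : ℕ) : A.Periodic (A.f^[k] u) := by
  obtain ⟨p, hp, h⟩ := hu
  refine ⟨p, hp, ?_⟩
  rw [← Function.iterate_add_apply, Nat.add_comm, Function.iterate_add_apply, h]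

lemma shift_periodic {u : A.S} (hu : A.Periodic u) (i : ℕ) : A.Periodic (A.shiftState u i) :=
  periodic_iter A hu _

lemma shift_succ {u : A.S} (hu : A.Periodic u) (i : ℕ) :
    A.f (A.shiftState u (i+1)) = A.shiftState u i := by
  obtain ⟨h1, h2⟩ := minPeriod_spec A hu
  unfold FDDS.shiftState
  rw [← Function.iterate_succ_apply' A.f]
  have : ((i+1) * (A.minPeriod u - 1)).succ = i * (A.minPeriod u - 1) + A.minPeriod u := by
    rw [Nat.add_mul]; omega
  rw [this, Function.iterate_add_apply, h2]

lemma iter_shift {u : A.S} (hu : A.Periodic u) (i k : ℕ) :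
    A.f^[k] (A.shiftState u (i+k)) = A.shiftState u i := by
  induction k with
  | zero => rfl
  | succ k ih =>
    rw [Function.iterate_succ_apply, ← Nat.add_assoc, shift_succ A hu, ih]

lemma iter_shift' {u : A.S} (hu : A.Periodic u) (k : ℕ) :
    A.f^[k] (A.shiftState u k) = u := by
  have := iter_shift A hu 0 k
  rwa [Nat.zero_add, shift_zero] at this

lemma periodic_inj {s s' : A.S} (hs : A.Periodic s) (hs' : A.Periodic s') (k : ℕ)
    (h : A.f^[k] s = A.f^[k] s') : s = s' := by
  obtain ⟨p, hp, h1⟩ := hs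
  obtain ⟨p', hp', h2⟩ := hs'
  have e1 : A.f^[k * p * p'] s = s := by
    rw [show k * p * p' = p * (k * p') by ring, Function.iterate_mul]
    exact Function.iterate_fixed h1 _
  have e2 : A.f^[k * p * p'] s' = s' := by
    rw [show k * p * p' = p' * (k * p) by ring, Function.iterate_mul]
    exact Function.iterate_fixed h2 _
  have hk : k * p * p' = (k * p * p' - k) + k := by
    have : k * 1 * 1 ≤ k * p * p' := by gcongr
    omega
  rw [← e1, ← e2, hk, Function.iterate_add_apply, h, ← Function.iterate_add_apply]

lemma shift_unique {u s : A.S} (hu : A.Periodic u) (hs : A.Periodic s) (k : ℕ)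
    (h : A.f^[k] s = u) : s = A.shiftState u k :=
  periodic_inj A hs (shift_periodic A hu k) k (by rw [h, iter_shift' A hu])

lemma shift_shift {u : A.S} (hu : A.Periodic u) (i j : ℕ) :
    A.shiftState (A.shiftState u i) j = A.shiftState u (i + j) := by
  refine shift_unique A hu (shift_periodic A (shift_periodic A hu i) j) _ ?_
  rw [Function.iterate_add_apply, iter_shift' A (shift_periodic A hu i), iter_shift' A hu]

lemma shift_mul_period {u : A.S} (hu : A.Periodic u) (m : ℕ) :
    A.shiftState u (m * A.minPeriod u) = u := by
  refine (shift_unique A hu hu _ ?_).symm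
  rw [Nat.mul_comm, Function.iterate_mul]
  exact Function.iterate_fixed (minPeriod_spec A hu).2 _

/-- After `card` steps every state is periodic. -/
lemma periodic_of_large (s : A.S) (k : ℕ) (hk : Fintype.card A.S ≤ k) :
    A.Periodic (A.f^[k] s) := by
  have hni : ¬ Function.Injective (fun i : Fin (Fintype.card A.S + 1) => A.f^[i.1] s) := by
    intro h
    have := Fintype.card_le_of_injective _ h
    simp at this
  simp only [Function.Injective, not_forall] at hni
  obtain ⟨i, j, hij, hne⟩ := hni
  have key : ∀ i j : ℕ, i < j → j ≤ k → A.f^[i] s = A.f^[j] s → A.Periodic (A.f^[k] s) := by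
    intro i j hlt hj h
    have : A.Periodic (A.f^[i] s) := by
      refine ⟨j - i, by omega, ?_⟩
      rw [← Function.iterate_add_apply, Nat.sub_add_cancel hlt.le, h]
    have h2 := periodic_iter A this (k - i)
    rwa [← Function.iterate_add_apply, Nat.sub_add_cancel (by omega)] at h2
  have hi := i.2
  have hj := j.2
  rcases lt_trichotomy i.1 j.1 with h | h | h
  · exact key _ _ h (by omega) hij
  · exact absurd (Fin.ext h) hne
  · exact key _ _ h (by omega) hij.symm

/-- The infinite branch of an unroll tree. -/
noncomputable def br {u : A.S} (hu : A.Periodic u) (k : ℕ) : (A.unrollTree u).level k :=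
  ⟨A.shiftState u k, iter_shift' A hu k⟩

lemma br_parent {u : A.S} (hu : A.Periodic u) (k : ℕ) :
    (A.unrollTree u).parent k (br A hu (k+1)) = br A hu k :=
  Subtype.ext (shift_succ A hu k)

lemma anc_unroll (u : A.S) (N k : ℕ) (y : (A.unrollTree u).level (N + k)) :
    (anc (A.unrollTree u) N k y).1 = A.f^[k] y.1 := by
  induction k with
  | zero => rfl
  | succ k ih => exact ih ((A.unrollTree u).parent (N + k) y)

lemma anc_large {u : A.S} (hu : A.Periodic u) (N k : ℕ) (hk : Fintype.card A.S ≤ k)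
    (y : (A.unrollTree u).level (N + k)) : anc (A.unrollTree u) N k y = br A hu N := by
  apply Subtype.ext
  refine shift_unique A hu ?_ N (anc (A.unrollTree u) N k y).2
  rw [anc_unroll]
  exact periodic_of_large A _ _ hk

lemma anc_branch (t : RTree) (b : ∀ k, t.level k) (hb : ∀ k, t.parent k (b (k+1)) = b k)
    (N k : ℕ) : anc t N k (b (N + k)) = b N := by
  induction k with
  | zero => rfl
  | succ k ih =>
    have h1 : anc t N (k+1) (b (N + (k+1))) = anc t N k (t.parent (N + k) (b (N + k + 1))) := rfl
    rw [h1, hb, ih]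

lemma branch_unique {u : A.S} (hu : A.Periodic u) (b : ∀ k, (A.unrollTree u).level k)
    (hb : ∀ k, (A.unrollTree u).parent k (b (k+1)) = b k) (k : ℕ) : b k = br A hu k := by
  rw [← anc_branch _ b hb k (Fintype.card A.S)]
  exact anc_large A hu _ _ le_rfl _

lemma sub_unroll {u : A.S} (hu : A.Periodic u) (N : ℕ) :
    RTree.Iso (sub (A.unrollTree u) N (br A hu N)) (A.shiftTree u N) := by
  refine ⟨fun k => ⟨fun y => ⟨y.1.1, ?_⟩, fun y => ⟨⟨y.1, ?_⟩, ?_⟩, ?_, ?_⟩, ?_⟩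
  · rw [← anc_unroll, y.2]; rfl
  · rw [Function.iterate_add_apply, y.2, iter_shift' A hu]
  · apply Subtype.ext
    exact (anc_unroll A u N k _).trans y.2
  · intro y; rfl
  · intro y; rfl
  · intro k y; rfl

end fdds

lemma shift_iso {A B : FDDS} {u : A.S} {v : B.S} (hu : A.Periodic u) (hv : B.Periodic v)
    (h : RTree.Iso (A.unrollTree u) (B.unrollTree v)) (N : ℕ) :
    RTree.Iso (A.shiftTree u N) (B.shiftTree v N) := by
  obtain ⟨e, he⟩ := h
  have h1 := sub_iso e he N (br A hu N)
  have h2 : e N (br A hu N) = br B hv N :=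
    branch_unique B hv (fun k => e k (br A hu k)) (fun k => by
      rw [← he, br_parent]) N
  rw [h2] at h1
  exact iso_trans (iso_symm (sub_unroll A hu N)) (iso_trans h1 (sub_unroll B hv N))

lemma shift_prod {A B : FDDS} {u : A.S} {v : B.S} (hu : A.Periodic u) (hv : B.Periodic v)
    {x : RTree} (b : ∀ k, x.level k) (hb : ∀ k, x.parent k (b (k+1)) = b k)
    (h : RTree.Iso ((A.unrollTree u).tprod x) (B.unrollTree v)) (N : ℕ) :
    RTree.Iso ((A.shiftTree u N).tprod (sub x N (b N))) (B.shiftTree v N) := by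
  obtain ⟨e, he⟩ := h
  have h1 := sub_iso e he N (br A hu N, b N)
  have h2 : e N (br A hu N, b N) = br B hv N :=
    branch_unique B hv (fun k => e k (br A hu k, b k)) (fun k => by
      refine (he k (br A hu (k+1), b (k+1))).symm.trans ?_
      exact congrArg (e k) (Prod.ext (br_parent A hu k) (hb k))) N
  rw [h2] at h1
  exact iso_trans (iso_prod (iso_symm (sub_unroll A hu N)) (iso_refl _))
    (iso_trans (sub_prod _ _ _ _ _) (iso_trans h1 (sub_unroll B hv N)))

lemma shift_prod' {A B C : FDDS} {u : A.S} {v : B.S} {w : C.S}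
    (hu : A.Periodic u) (hv : B.Periodic v) (hw : C.Periodic w)
    (h : RTree.Iso ((A.unrollTree u).tprod (C.unrollTree w)) (B.unrollTree v)) (N : ℕ) :
    RTree.Iso ((A.shiftTree u N).tprod (C.shiftTree w N)) (B.shiftTree v N) :=
  iso_trans (iso_prod (iso_refl _) (iso_symm (sub_unroll C hw N)))
    (shift_prod hu hv (br C hw) (br_parent C hw) h N)

lemma exists_branch {A B : FDDS} {u : A.S} {v : B.S} (hu : A.Periodic u) (hv : B.Periodic v)
    {x : RTree} (h : RTree.Iso ((A.unrollTree u).tprod x) (B.unrollTree v)) :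
    ∃ b : ∀ k, x.level k, (∀ k, x.parent k (b (k+1)) = b k) ∧
      ∃ K, ∀ N k, K ≤ k → ∀ y : x.level (N + k), anc x N k y = b N := by
  obtain ⟨e, he⟩ := h
  have hb : ∀ k, x.parent k ((e (k+1)).symm (br B hv (k+1))).2 = ((e k).symm (br B hv k)).2 := by
    intro k
    have h1 := he k ((e (k+1)).symm (br B hv (k+1)))
    rw [Equiv.apply_symm_apply, br_parent, ← Equiv.eq_symm_apply] at h1
    rw [← h1]; rfl
  refine ⟨fun k => ((e k).symm (br B hv k)).2, hb, Fintype.card B.S, ?_⟩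
  intro N k hk y
  have h1 := anc_iso e he N k (br A hu (N + k), y)
  rw [anc_large B hv N k hk, anc_prod] at h1
  have h2 := (Equiv.eq_symm_apply (e N)).2 h1
  exact congrArg Prod.snd h2

/-! ### Rolling up a periodic tree -/

/-- The parent map on the set of all vertices (the root is sent to itself). -/
def par (t : RTree) : (Σ k, t.level k) → (Σ k, t.level k)
  | ⟨0, v⟩ => ⟨0, v⟩
  | ⟨k + 1, v⟩ => ⟨k, t.parent k v⟩

lemma par_fst (t : RTree) (v : Σ k, t.level k) : (par t v).1 = v.1 - 1 := by
  obtain ⟨k, v⟩ := v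
  cases k <;> rfl

lemma iso_of_sigma {t s : RTree} (E : (Σ k, t.level k) → (Σ k, s.level k))
    (hinj : Function.Injective E) (hsurj : Function.Surjective E)
    (hd : ∀ v, (E v).1 = v.1)
    (hp : ∀ k (v : t.level (k+1)), E ⟨k, t.parent k v⟩ = par s (E ⟨k+1, v⟩)) :
    RTree.Iso t s := by
  have h1 : ∀ k (v : t.level k), ∃ w : s.level k, E ⟨k, v⟩ = ⟨k, w⟩ := by
    intro k v
    have h2 := hd ⟨k, v⟩
    generalize E ⟨k, v⟩ = z at h2
    obtain ⟨k', w⟩ := z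
    dsimp only at h2
    subst h2
    exact ⟨w, rfl⟩
  choose g hg using h1
  have hbij : ∀ k, Function.Bijective (g k) := by
    intro k
    constructor
    · intro v w h
      have h2 : E ⟨k, v⟩ = E ⟨k, w⟩ := by rw [hg, hg, h]
      exact eq_of_heq (Sigma.mk.inj (hinj h2)).2
    · intro w
      obtain ⟨⟨k', v⟩, hv⟩ := hsurj ⟨k, w⟩
      have h2 := hd ⟨k', v⟩
      rw [hv] at h2
      dsimp only at h2
      subst h2
      refine ⟨v, ?_⟩
      rw [hg] at hv
      exact eq_of_heq (Sigma.mk.inj hv).2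
  refine ⟨fun k => Equiv.ofBijective (g k) (hbij k), ?_⟩
  intro k v
  have h2 := hp k v
  rw [hg, hg] at h2
  exact eq_of_heq (Sigma.mk.inj h2).2

theorem roll {x : RTree} (M : ℕ) (b : ∀ k, x.level k) (hb : ∀ k, x.parent k (b (k+1)) = b k)
    (K : ℕ) (hK : ∀ k, K ≤ k → ∀ y : x.level (M + 1 + k), anc x (M+1) k y = b (M+1))
    (hiso : RTree.Iso x (sub x (M+1) (b (M+1)))) :
    ∃ (C : FDDS) (w : C.S), C.Periodic w ∧ RTree.Iso x (C.unrollTree w) := by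
  classical
  obtain ⟨e, he⟩ := hiso
  obtain ⟨N, hN⟩ : ∃ N, N = M + 1 := ⟨_, rfl⟩
  let V := Σ k, x.level k
  let Φ : V → V := fun v => ⟨M + 1 + v.1, (e v.1 v.2).1⟩
  have hd : ∀ v, (Φ v).1 = N + v.1 := fun v => by rw [hN]
  have hinj : Function.Injective Φ := by
    rintro ⟨k, v⟩ ⟨l, w⟩ h
    have h1 : k = l := by
      have := congrArg Sigma.fst h
      rw [hd, hd] at this
      simpa using this
    subst h1
    have h2 := eq_of_heq (Sigma.mk.inj h).2
    have h3 : v = w := (e k).injective (Subtype.ext h2)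
    rw [h3]
  have hpar : ∀ v : V, 0 < v.1 → par x (Φ v) = Φ (par x v) := by
    rintro ⟨k, v⟩ hk
    cases k with
    | zero => exact absurd hk (lt_irrefl _)
    | succ k =>
      have h1 := congrArg Subtype.val (he k v)
      refine Sigma.ext rfl (heq_of_eq ?_)
      exact h1.symm
  have hanc : ∀ (k : ℕ) (y : x.level (M + 1 + k)), anc x (M+1) k y = b (M+1) →
      (⟨M + 1 + k, y⟩ : V) ∈ Set.range Φ := by
    intro k y h
    refine ⟨⟨k, (e k).symm ⟨y, h⟩⟩, ?_⟩
    refine Sigma.ext rfl (heq_of_eq ?_)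
    exact congrArg Subtype.val ((e k).apply_symm_apply ⟨y, h⟩)
  have hclosed : ∀ v : V, 0 < v.1 → par x v ∈ Set.range Φ → v ∈ Set.range Φ := by
    rintro ⟨k, v⟩ hk ⟨⟨j, y⟩, hy⟩
    cases k with
    | zero => exact absurd hk (lt_irrefl _)
    | succ k =>
      have h0 : M + 1 + j = k := congrArg Sigma.fst hy
      subst h0
      have h1 : (e j y).1 = x.parent (M + 1 + j) v := eq_of_heq (Sigma.mk.inj hy).2
      refine hanc (j+1) v ?_
      change anc x (M+1) j (x.parent (M + 1 + j) v) = _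
      rw [← h1]
      exact (e j y).2
  have hlarge : ∀ v : V, N + K ≤ v.1 → v ∈ Set.range Φ := by
    rintro ⟨k, v⟩ hk
    dsimp only at hk
    obtain ⟨j, rfl⟩ : ∃ j, k = M + 1 + j := ⟨k - (M+1), by omega⟩
    exact hanc j v (hK j (by omega) v)
  have hsmall : ∀ v : V, v.1 < N → v ∉ Set.range Φ := by
    rintro v hv ⟨w, rfl⟩
    rw [hd] at hv
    omega
  have hroot : Φ ⟨0, x.root⟩ = ⟨M + 1, b (M+1)⟩ := by
    refine Sigma.ext rfl (heq_of_eq ?_)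
    exact (e 0 x.root).2
  have hrootu : ∀ v : V, v.1 = 0 → v = ⟨0, x.root⟩ := by
    rintro ⟨k, v⟩ hk
    dsimp only at hk
    subst hk
    rw [x.root_unique v]
  have hparroot : par x (Φ ⟨0, x.root⟩) = ⟨M, b M⟩ := by
    rw [hroot]
    exact Sigma.ext rfl (heq_of_eq (hb M))
  clear_value Φ
  clear hroot hanc he e hK hb
  -- abstract part
  have hditer : ∀ m v, (Φ^[m] v).1 = m * N + v.1 := by
    intro m
    induction m with
    | zero => intro v; simp
    | succ m ih => intro v; rw [Function.iterate_succ_apply', hd, ih]; ring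
  have hpariter : ∀ m (v : V), 0 < v.1 → par x (Φ^[m] v) = Φ^[m] (par x v) := by
    intro m
    induction m with
    | zero => intro v _; rfl
    | succ m ih =>
      intro v hv
      rw [Function.iterate_succ_apply', Function.iterate_succ_apply', hpar, ih v hv]
      rw [hditer]; omega
  have huniq : ∀ m m' (v w : V), v ∉ Set.range Φ → w ∉ Set.range Φ → Φ^[m] v = Φ^[m'] w →
      m = m' ∧ v = w := by
    intro m
    induction m with
    | zero =>
      intro m' v w hv hw h
      cases m' with
      | zero => exact ⟨rfl, h⟩
      | succ m' =>
        rw [Function.iterate_succ_apply'] at h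
        exact absurd ⟨_, h.symm⟩ hv
    | succ m ih =>
      intro m' v w hv hw h
      cases m' with
      | zero =>
        rw [Function.iterate_succ_apply'] at h
        exact absurd ⟨_, h⟩ hw
      | succ m' =>
        rw [Function.iterate_succ_apply', Function.iterate_succ_apply'] at h
        obtain ⟨h1, h2⟩ := ih m' v w hv hw (hinj h)
        exact ⟨by rw [h1], h2⟩
  have hex : ∀ n (v : V), v.1 = n → ∃ m w, w ∉ Set.range Φ ∧ Φ^[m] w = v := by
    intro n
    induction n using Nat.strong_induction_on with
    | _ n ih =>
      intro v hv
      by_cases h : v ∈ Set.range Φ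
      · obtain ⟨v', rfl⟩ := h
        rw [hd] at hv
        obtain ⟨m, w, hw, h1⟩ := ih v'.1 (by omega) v' rfl
        exact ⟨m+1, w, hw, by rw [Function.iterate_succ_apply', h1]⟩
      · exact ⟨0, v, h, rfl⟩
  let S := {v : V // v ∉ Set.range Φ}
  have hfin : Finite S := by
    have : Set.Finite {v : V | v ∉ Set.range Φ} := by
      refine (Set.finite_range
        (fun z : (Σ k : Fin (N + K), x.level k.1) => (⟨z.1.1, z.2⟩ : V))).subset ?_
      rintro ⟨k, v⟩ hv
      have hk : k < N + K := by
        by_contra h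
        exact hv (hlarge _ (by simpa using h))
      exact ⟨⟨⟨k, hk⟩, v⟩, rfl⟩
    exact this.to_subtype
  let f : S → S := fun s => if h : s.1.1 = 0 then ⟨⟨M, b M⟩, hsmall _ (by simp [hN])⟩ else
    ⟨par x s.1, fun h' => s.2 (hclosed _ (Nat.pos_of_ne_zero h) h')⟩
  have hf0 : ∀ s : S, s.1.1 = 0 → (f s).1 = ⟨M, b M⟩ := fun s h => by simp [f, h]
  have hf1 : ∀ s : S, s.1.1 ≠ 0 → (f s).1 = par x s.1 := fun s h => by simp [f, h]
  clear_value f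
  let r : S := ⟨⟨0, x.root⟩, hsmall _ (by simp [hN])⟩
  have hru : ∀ s : S, s.1.1 = 0 → s = r := fun s h => Subtype.ext (hrootu _ h)
  have claim : ∀ k s, f^[k] s = r ↔ ∃ m, m * N + s.1.1 = k := by
    intro k
    induction k with
    | zero =>
      intro s
      constructor
      · rintro rfl; exact ⟨0, by simp [r]⟩
      · rintro ⟨m, hm⟩
        exact hru s (by omega)
    | succ k ih =>
      intro s
      rw [Function.iterate_succ_apply, ih]
      by_cases h : s.1.1 = 0
      · rw [hf0 s h, h]
        dsimp only
        constructor
        · rintro ⟨m, hm⟩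
          exact ⟨m + 1, by rw [Nat.add_mul]; omega⟩
        · rintro ⟨m, hm⟩
          cases m with
          | zero => omega
          | succ m => exact ⟨m, by rw [Nat.add_mul] at hm; omega⟩
      · rw [hf1 s h, par_fst]
        constructor
        · rintro ⟨m, hm⟩; exact ⟨m, by omega⟩
        · rintro ⟨m, hm⟩; exact ⟨m, by omega⟩
  let C : FDDS := ⟨S, Fintype.ofFinite S, f⟩
  have hper : C.Periodic r := ⟨N, by omega, (claim N r).2 ⟨1, by simp [r]⟩⟩
  refine ⟨C, r, hper, iso_symm ?_⟩
  let E : (Σ k, (C.unrollTree r).level k) → V := fun z => Φ^[(z.1 - z.2.1.1.1) / N] z.2.1.1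
  have hE : ∀ k (s : (C.unrollTree r).level k) m, m * N + s.1.1.1 = k →
      E ⟨k, s⟩ = Φ^[m] s.1.1 := by
    intro k s m hm
    have : (k - s.1.1.1) / N = m := by
      have h1 : k - s.1.1.1 = m * N := by omega
      rw [h1, Nat.mul_div_cancel _ (by omega)]
    change Φ^[(k - s.1.1.1) / N] s.1.1 = _
    rw [this]
  have hm : ∀ k (s : (C.unrollTree r).level k), ∃ m, m * N + s.1.1.1 = k :=
    fun k s => (claim k s.1).1 s.2
  clear_value E
  apply iso_of_sigma E
  · rintro ⟨k, s⟩ ⟨l, s'⟩ h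
    obtain ⟨m, hm1⟩ := hm k s
    obtain ⟨m', hm2⟩ := hm l s'
    rw [hE k s m hm1, hE l s' m' hm2] at h
    obtain ⟨h1, h2⟩ := huniq _ _ _ _ s.1.2 s'.1.2 h
    have h3 : k = l := by rw [← hm1, ← hm2, h1, h2]
    subst h3
    have h4 : s = s' := Subtype.ext (Subtype.ext h2)
    rw [h4]
  · intro v
    obtain ⟨m, w, hw, h⟩ := hex _ v rfl
    refine ⟨⟨m * N + w.1, ⟨⟨w, hw⟩, (claim _ _).2 ⟨m, rfl⟩⟩⟩, ?_⟩
    exact (hE _ _ m rfl).trans h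
  · rintro ⟨k, s⟩
    obtain ⟨m, hm1⟩ := hm k s
    rw [hE k s m hm1, hditer]
    exact hm1
  · intro k s
    obtain ⟨m, hm1⟩ := hm (k+1) s
    rw [hE _ s m hm1]
    have hps : ((C.unrollTree r).parent k s).1 = f s.1 := rfl
    by_cases h : s.1.1.1 = 0
    · cases m with
      | zero => omega
      | succ m =>
        have h5 := hf0 s.1 h
        rw [hE k _ m (by rw [hps, h5]; rw [Nat.add_mul] at hm1; dsimp only; omega), hps, h5,
          Function.iterate_succ_apply, hpariter, hrootu _ h, hparroot]
        rw [hd]; omega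
    · have h5 := hf1 s.1 h
      rw [hE k _ m (by rw [hps, h5, par_fst]; omega), hps, h5, hpariter _ _ (Nat.pos_of_ne_zero h)]

/-! ### The pattern size -/

lemma shiftCount_spec (A : FDDS) {u : A.S} (hu : A.Periodic u) :
    A.PatternSize u (A.shiftCount u) := by
  refine Nat.sInf_mem (s := {p | A.PatternSize u p}) ⟨A.minPeriod u, ?_⟩
  refine ⟨(minPeriod_spec A hu).1, ?_⟩
  have h := shift_mul_period A hu 1
  rw [Nat.one_mul] at h
  unfold FDDS.shiftTree
  rw [h]
  exact iso_refl _

lemma shiftCount_mul (A : FDDS) {u : A.S} (hu : A.Periodic u) (m : ℕ) :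
    RTree.Iso (A.shiftTree u (m * A.shiftCount u)) (A.unrollTree u) := by
  induction m with
  | zero =>
    rw [Nat.zero_mul]; unfold FDDS.shiftTree; rw [shift_zero]; exact iso_refl _
  | succ m ih =>
    have h := shift_iso (shift_periodic A hu _) hu ih (A.shiftCount u)
    unfold FDDS.shiftTree at h
    rw [shift_shift A hu] at h
    rw [Nat.succ_mul]
    exact iso_trans h (shiftCount_spec A hu).2

lemma shift_inj_aux (A : FDDS) {u : A.S} (hu : A.Periodic u) {i j : ℕ} (hij : i < j)
    (hj : j < A.shiftCount u) (h : RTree.Iso (A.shiftTree u i) (A.shiftTree u j)) : False := by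
  obtain ⟨P, hP, hP1⟩ : ∃ P, P = A.minPeriod u ∧ 1 ≤ P := ⟨_, rfl, (minPeriod_spec A hu).1⟩
  have hle : i * 1 ≤ i * P := Nat.mul_le_mul_left _ hP1
  have h1 := shift_iso (shift_periodic A hu i) (shift_periodic A hu j) h (i * P - i)
  unfold FDDS.shiftTree at h1
  rw [shift_shift A hu, shift_shift A hu, show i + (i * P - i) = i * P by omega,
    show j + (i * P - i) = i * P + (j - i) by omega, ← shift_shift A hu (i * P), hP,
    shift_mul_period A hu] at h1
  have h2 : A.shiftCount u ≤ j - i :=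
    Nat.sInf_le (s := {p | A.PatternSize u p}) ⟨by omega, iso_symm h1⟩
  omega

lemma shift_inj (A : FDDS) {u : A.S} (hu : A.Periodic u) {i j : ℕ} (hi : i < A.shiftCount u)
    (hj : j < A.shiftCount u) (h : RTree.Iso (A.shiftTree u i) (A.shiftTree u j)) : i = j := by
  rcases lt_trichotomy i j with h1 | h1 | h1
  · exact (shift_inj_aux A hu h1 hj h).elim
  · exact h1
  · exact (shift_inj_aux A hu h1 hi (iso_symm h)).elim

lemma mem_of_rel {α β : Type*} {r : α → β → Prop} {s : Multiset α} {t : Multiset β}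
    (h : Multiset.Rel r s t) {a : α} (ha : a ∈ s) : ∃ b ∈ t, r a b :=
  Multiset.exists_mem_of_rel_of_mem h ha

end S12

/-- Let `A, B` be FDDS, `t_a = t_{u_a}` an unroll tree of `𝒰(A)` and
`t_b = t_{u_b}` an unroll tree of `𝒰(B)`. Suppose there is an infinite rooted tree `x`
(with finitely many vertices at each depth) with `t_a·x = t_b` and such that the multiset
`{σ^i(t_a)·x : 0 ≤ i < |Shift(t_a)|}` is a sub-multiset of `𝒰(B)`. Then `x` is an unroll
tree, and the multiset `{t_a·σ^j(x) : 0 ≤ j < |Shift(x)|}` is a sub-multiset of `𝒰(B)`. -/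
theorem stmt12 (A B : FDDS) (ua : A.S) (hua : A.Periodic ua) (ub : B.S) (hub : B.Periodic ub)
    (x : RTree) (hxinf : ¬ x.IsFinite)
    (hprod : RTree.Iso (RTree.tprod (A.unrollTree ua) x) (B.unrollTree ub))
    (hsub : ForestLe
      ((List.range (A.shiftCount ua)).map fun i => RTree.tprod (A.shiftTree ua i) x)
      (FDDS.unroll B)) :
    IsUnrollTree x ∧
      ∃ (C : FDDS) (w : C.S), C.Periodic w ∧ RTree.Iso x (C.unrollTree w) ∧
        ForestLe
          ((List.range (C.shiftCount w)).map fun j =>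
            RTree.tprod (A.unrollTree ua) (C.shiftTree w j))
          (FDDS.unroll B) := by
  have hmem : ∀ i < A.shiftCount ua, ∃ v : B.S, B.Periodic v ∧
      RTree.Iso ((A.shiftTree ua i).tprod x) (B.unrollTree v) := by
    intro i hi
    obtain ⟨H, hH, hrel⟩ := hsub
    obtain ⟨t, ht, hiso⟩ := S12.mem_of_rel hrel (a := (A.shiftTree ua i).tprod x)
      (Multiset.mem_coe.2 (List.mem_map.2 ⟨i, List.mem_range.2 hi, rfl⟩))
    have ht2 := Multiset.mem_coe.1 (Multiset.mem_of_le hH ht)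
    unfold FDDS.unroll at ht2
    obtain ⟨v, hv, rfl⟩ := List.mem_map.1 ht2
    simp only [Finset.mem_toList, Finset.mem_filter] at hv
    exact ⟨v, hv.2, hiso⟩
  have hx : ∃ (C : FDDS) (w : C.S), C.Periodic w ∧ RTree.Iso x (C.unrollTree w) := by
    obtain ⟨b, hb, K, hK⟩ := S12.exists_branch hua hub hprod
    have hpa := (S12.minPeriod_spec A hua).1
    have hpb := (S12.minPeriod_spec B hub).1
    have hpos : 0 < A.minPeriod ua * B.minPeriod ub := Nat.mul_pos hpa hpb
    obtain ⟨M, hM⟩ : ∃ M, A.minPeriod ua * B.minPeriod ub = M + 1 :=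
      ⟨A.minPeriod ua * B.minPeriod ub - 1, by omega⟩
    have h1 := S12.shift_prod hua hub b hb hprod (M + 1)
    have h2 : A.shiftTree ua (M + 1) = A.unrollTree ua := by
      unfold FDDS.shiftTree
      rw [← hM, Nat.mul_comm, S12.shift_mul_period A hua]
    have h3 : B.shiftTree ub (M + 1) = B.unrollTree ub := by
      unfold FDDS.shiftTree
      rw [← hM, S12.shift_mul_period B hub]
    rw [h2, h3] at h1
    exact S12.roll M b hb K (hK (M + 1)) (S12.cancel (S12.br A hua) (S12.br_parent A hua)
      (S12.iso_trans hprod (S12.iso_symm h1)))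
  obtain ⟨C, w, hw, hxw⟩ := hx
  refine ⟨⟨C, w, hw, hxw⟩, C, w, hw, hxw, ?_⟩
  have key : ∀ j, ∃ v : B.S, B.Periodic v ∧
      RTree.Iso ((A.unrollTree ua).tprod (C.shiftTree w j)) (B.unrollTree v) := by
    intro j
    have hp := (S12.shiftCount_spec A hua).1
    obtain ⟨p, hpe⟩ : ∃ p, p = A.shiftCount ua := ⟨_, rfl⟩
    rw [← hpe] at hp
    obtain ⟨i, m, hi, him⟩ : ∃ i m, i < p ∧ i + j = m * p := by
      by_cases h : j % p = 0
      · exact ⟨0, j / p, hp, by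
          rw [Nat.zero_add, Nat.div_mul_cancel (Nat.dvd_of_mod_eq_zero h)]⟩
      · have h1 := Nat.mod_lt j hp
        refine ⟨p - j % p, j / p + 1, by omega, ?_⟩
        have h2 := Nat.div_add_mod j p
        rw [Nat.mul_comm] at h2
        rw [Nat.add_mul]
        omega
    obtain ⟨v, hv, hiso⟩ := hmem i (hpe ▸ hi)
    have hiso2 := S12.iso_trans (S12.iso_prod (S12.iso_refl _) (S12.iso_symm hxw)) hiso
    have h3 := S12.shift_prod' (S12.shift_periodic A hua i) hv hw hiso2 j
    have h4 : A.shiftTree (A.shiftState ua i) j = A.shiftTree ua (m * p) := by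
      unfold FDDS.shiftTree
      rw [S12.shift_shift A hua, him]
    rw [h4, hpe] at h3
    exact ⟨_, S12.shift_periodic B hv j, S12.iso_trans
      (S12.iso_prod (S12.iso_symm (S12.shiftCount_mul A hua m)) (S12.iso_refl _)) h3⟩
  choose v hv hiso using key
  have hvinj : ∀ i < C.shiftCount w, ∀ j < C.shiftCount w, v i = v j → i = j := by
    intro i hi j hj h
    have h1 := hiso i
    rw [h] at h1
    exact S12.shift_inj C hw hi hj (S12.cancel (S12.br A hua) (S12.br_parent A hua)
      (S12.iso_trans h1 (S12.iso_symm (hiso j))))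
  refine ⟨((Multiset.range (C.shiftCount w)).map v).map B.unrollTree, ?_, ?_⟩
  · unfold FDDS.unroll
    rw [← Multiset.map_coe]
    apply Multiset.map_le_map
    rw [Multiset.le_iff_subset]
    · intro s hs
      obtain ⟨j, _, rfl⟩ := Multiset.mem_map.1 hs
      simp only [Multiset.mem_coe, Finset.mem_toList, Finset.mem_filter]
      exact ⟨Finset.mem_univ _, hv j⟩
    · refine Multiset.Nodup.map_on ?_ (Multiset.nodup_range _)
      intro i hi j hj h
      exact hvinj i (Multiset.mem_range.1 hi) j (Multiset.mem_range.1 hj) h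
  · rw [← Multiset.map_coe, Multiset.map_map, Multiset.rel_map]
    exact Multiset.rel_refl_of_refl_on fun j _ => hiso j
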